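/- arXiv:2510.01811 — 2 statements merged into one kernel-verified Lean document; each statement's English description precedes it below -/
import Mathlib

section
/- Let F_q be a finite field, let m ≥ 1, let r be a positive integer, let I ⊆ ℤ_{≥0}^{m+1} be a finite set, and let (p_1, y_1), …, (p_n, y_n) be points of F_q^m × F_q. If |I| > C(m+r, m+1)·n, where C(m+r, m+1) is the binomial coefficient, then there exists a nonzero polynomial Q ∈ F_q[X_1,…,X_m,Y] whose support is contained in I and which has a zero of multiplicity at least r at (p_j, y_j) for every 1 ≤ j ≤ n. -/
/-- The translate `F(X + p)` of a multivariate polynomial `F` by a point `p`. -/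
noncomputable def polyTranslate {K : Type*} [CommRing K] {σ : Type*}
    (F : MvPolynomial σ K) (p : σ → K) : MvPolynomial σ K :=
  MvPolynomial.aeval (fun i => MvPolynomial.X i + MvPolynomial.C (p i)) F

/-- `F` has a zero of multiplicity at least `r` at `p` if every monomial of total degree `< r`
in the translated polynomial `F(X + p)` has zero coefficient. -/
def HasZeroOfMultAtLeast {K : Type*} [CommRing K] {σ : Type*}
    (F : MvPolynomial σ K) (p : σ → K) (r : ℕ) : Prop :=
  ∀ u ∈ (polyTranslate F p).support, r ≤ u.sum fun _ e => e

/-!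
For a fixed point `p`, each coefficient of `Q(X + p)` is a linear functional of `Q`, so a zero of
multiplicity at least `r` at `p` amounts to one homogeneous linear condition on `Q` for every
exponent vector of degree less than `r`; in `k` variables there are `(k + r - 1).choose k` of these.
As soon as the polynomials supported in `I` have more coefficients than there are conditions in
total, a nonzero one satisfies them all.
-/

open MvPolynomial

theorem exists_mem_ne_zero_forall_apply_eq_zero {R M κ : Type*} [Ring R]
    [StrongRankCondition R] [AddCommGroup M] [Module R M] [Finite κ] (N : Submodule R M)
    (φ : κ → M →ₗ[R] R) (hcard : Nat.card κ < Module.finrank R N) :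
    ∃ x ∈ N, x ≠ 0 ∧ ∀ k, φ k x = 0 := by
  have := Fintype.ofFinite κ
  let evalAll : N →ₗ[R] κ → R := LinearMap.pi φ ∘ₗ N.subtype
  have not_injective : ¬ Function.Injective evalAll := fun hinj ↦ by
    have hle := LinearMap.finrank_le_finrank_of_injective hinj
    rw [Module.finrank_fintype_fun_eq_card, ← Nat.card_eq_fintype_card] at hle
    exact hle.not_gt hcard
  rw [injective_iff_map_eq_zero] at not_injective
  push Not at not_injective
  obtain ⟨x, hx, hx0⟩ := not_injective
  exact ⟨x, x.2, by simpa using hx0, congrFun hx⟩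

theorem finrank_restrictSupport (R : Type*) {σ : Type*} [CommSemiring R] [StrongRankCondition R]
    (s : Set (σ →₀ ℕ)) : Module.finrank R (restrictSupport R s) = s.ncard := by
  rw [Module.finrank_eq_nat_card_basis (basisRestrictSupport R s), Nat.card_coe_set_eq]

theorem ncard_setOf_degree_le (σ : Type*) [Finite σ] (r : ℕ) :
    {u : σ →₀ ℕ | u.degree ≤ r}.ncard = (r + Nat.card σ).choose (Nat.card σ) := by
  classical
  have := Fintype.ofFinite σ
  have eq_biUnion : {u : σ →₀ ℕ | u.degree ≤ r} =
      ((Finset.range (r + 1)).biUnion (Finset.univ.finsuppAntidiag ·) : Finset (σ →₀ ℕ)) := by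
    ext u
    simp [Finsupp.degree_eq_sum]
  have pairwiseDisjoint : (Finset.range (r + 1) : Set ℕ).PairwiseDisjoint
      ((Finset.univ : Finset σ).finsuppAntidiag ·) := fun d _ e _ hde ↦
    Finset.disjoint_left.2 fun u hd he ↦
      hde ((Finset.mem_finsuppAntidiag.1 hd).1.symm.trans (Finset.mem_finsuppAntidiag.1 he).1)
  calc {u : σ →₀ ℕ | u.degree ≤ r}.ncard
      = ∑ d ∈ Finset.range (r + 1), (Nat.card σ).multichoose d := by
        simp only [eq_biUnion, Set.ncard_coe_finset, Finset.card_biUnion pairwiseDisjoint,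
          Finset.card_finsuppAntidiag_nat_eq_multichoose, Finset.card_univ,
          Nat.card_eq_fintype_card]
    _ = (r + Nat.card σ).choose (Nat.card σ) := Nat.sum_range_multichoose _ _

section Multiplicity

variable {K σ : Type*} [CommRing K]

/-- The `u`-th coefficient of `F(X + p)` as a linear functional of `F`: the `u`-th Hasse
derivative at `p`. A zero of multiplicity at least `r` at `p` is the vanishing of those with
`u.degree < r`. -/
noncomputable def translateCoeff (p : σ → K) (u : σ →₀ ℕ) : MvPolynomial σ K →ₗ[K] K :=
  lcoeff K u ∘ₗ (aeval fun i ↦ X i + C (p i)).toLinearMap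

theorem hasZeroOfMultAtLeast_iff_translateCoeff_eq_zero {F : MvPolynomial σ K} {p : σ → K} {r : ℕ} :
    HasZeroOfMultAtLeast F p r ↔ ∀ u : σ →₀ ℕ, u.degree < r → translateCoeff p u F = 0 := by
  refine forall_congr' fun u ↦ ?_
  rw [← not_imp_not, not_le, notMem_support_iff]
  rfl

theorem exists_nonzero_interpolating_poly_with_multiplicity_general [Nontrivial K] [Finite σ]
    {ι : Type*} [Fintype ι] (I : Finset (σ →₀ ℕ)) (p : ι → σ → K) (r : ι → ℕ)
    (hI : ∑ j, {u : σ →₀ ℕ | u.degree < r j}.ncard < I.card) :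
    ∃ Q : MvPolynomial σ K, Q ≠ 0 ∧ (Q.support : Set (σ →₀ ℕ)) ⊆ I ∧
      ∀ j, HasZeroOfMultAtLeast Q (p j) (r j) := by
  have (j : ι) : Finite {u : σ →₀ ℕ | u.degree < r j} := Finsupp.finite_of_degree_lt (r j)
  let condition : (Σ j, {u : σ →₀ ℕ | u.degree < r j}) → MvPolynomial σ K →ₗ[K] K :=
    fun c ↦ translateCoeff (p c.1) c.2
  obtain ⟨Q, hQI, hQ0, hQ⟩ := exists_mem_ne_zero_forall_apply_eq_zero
    (restrictSupport K (I : Set (σ →₀ ℕ))) condition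
    (by simpa only [Nat.card_sigma, Nat.card_coe_set_eq, finrank_restrictSupport,
      Set.ncard_coe_finset] using hI)
  exact ⟨Q, hQ0, (mem_restrictSupport_iff K).1 hQI, fun j ↦
    hasZeroOfMultAtLeast_iff_translateCoeff_eq_zero.2 fun u hu ↦ hQ ⟨j, u, hu⟩⟩

end Multiplicity

/-- Let `F_q` be a finite field, `m ≥ 1`, `r ≥ 1`, `I ⊆ ℤ_{≥0}^{m+1}` finite, and
`(p_1, y_1), …, (p_n, y_n)` points of `F_q^m × F_q`.  If `|I| > C(m+r, m+1)·n` then there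
exists a nonzero `Q ∈ F_q[X_1,…,X_m,Y]` with support contained in `I` having a zero of
multiplicity at least `r` at each `(p_j, y_j)`. -/
theorem exists_nonzero_interpolating_poly_with_multiplicity
    (Fq : Type*) [Field Fq] [Fintype Fq]
    (m : ℕ) (hm : 1 ≤ m) (r : ℕ) (hr : 1 ≤ r)
    (I : Finset (Fin (m + 1) →₀ ℕ))
    (n : ℕ) (p : Fin n → (Fin m → Fq)) (y : Fin n → Fq)
    (hI : Nat.choose (m + r) (m + 1) * n < I.card) :
    ∃ Q : MvPolynomial (Fin (m + 1)) Fq, Q ≠ 0 ∧ (Q.support : Set (Fin (m + 1) →₀ ℕ)) ⊆ I ∧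
      ∀ j : Fin n, HasZeroOfMultAtLeast Q (Fin.snoc (p j) (y j)) r := by
  obtain ⟨s, rfl⟩ := Nat.exists_eq_add_of_le' hr
  exact exists_nonzero_interpolating_poly_with_multiplicity_general I _ _
    (by simpa [ncard_setOf_degree_le, mul_comm, add_left_comm] using hI)
end

section
/- Let K be a field, let m ≥ 1 and r ≥ 1 be integers, let Q ∈ K[X_1,…,X_m,Y], let f ∈ K[X_1,…,X_m], and let p ∈ K^m. If Q has a zero of multiplicity at least r at the point (p, f(p)) ∈ K^m × K, then the polynomial F(X_1,…,X_m) = Q(X_1,…,X_m, f(X_1,…,X_m)) has a zero of multiplicity at least r at p (i.e., every monomial of total degree < r in F(X + p) has zero coefficient). -/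
/-!
After translating `p` to the origin, vanishing to order `r` means lying in the `r`-th power of the
ideal `𝔪` generated by the variables. Substituting polynomials `g i` for the variables of `Q`
becomes, after translating both source and target, substituting the polynomials
`g i (X + p) - g i (p)`; these have no constant term, so the substitution maps `𝔪 ^ r` into
`𝔪 ^ r`.
-/

open MvPolynomial

section IdealOfVars

variable {R σ : Type*} [CommSemiring R]

theorem mem_idealOfVars_iff_constantCoeff_eq_zero {F : MvPolynomial σ R} :
    F ∈ idealOfVars σ R ↔ constantCoeff F = 0 := by
  rw [← pow_one (idealOfVars σ R), mem_pow_idealOfVars_iff']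
  simp only [Nat.lt_one_iff, Finsupp.degree_eq_zero_iff, forall_eq, constantCoeff_eq]

theorem aeval_mem_pow_of_mem_pow_idealOfVars {A : Type*} [CommSemiring A] [Algebra R A]
    {I : Ideal A} {g : σ → A} (hg : ∀ i, g i ∈ I) {r : ℕ} {F : MvPolynomial σ R}
    (hF : F ∈ idealOfVars σ R ^ r) : aeval g F ∈ I ^ r := by
  have map_le : (idealOfVars σ R).map (aeval g) ≤ I := by
    rw [Ideal.map_span, Ideal.span_le]
    rintro _ ⟨_, ⟨i, rfl⟩, rfl⟩
    simpa only [aeval_X, SetLike.mem_coe] using hg i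
  have mem_map : aeval g F ∈ (idealOfVars σ R).map (aeval g) ^ r := by
    rw [← Ideal.map_pow]
    exact Ideal.mem_map_of_mem _ hF
  exact Ideal.pow_right_mono map_le r mem_map

end IdealOfVars

section Translate

variable {R σ τ : Type*} [CommRing R]

theorem hasZeroOfMultAtLeast_iff_polyTranslate_mem_pow {F : MvPolynomial σ R} {p : σ → R} {r : ℕ} :
    HasZeroOfMultAtLeast F p r ↔ polyTranslate F p ∈ idealOfVars σ R ^ r :=
  (mem_pow_idealOfVars_iff r _).symm

theorem constantCoeff_polyTranslate (F : MvPolynomial σ R) (p : σ → R) :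
    constantCoeff (polyTranslate F p) = eval p F := by
  induction F using MvPolynomial.induction_on with
  | C a => simp [polyTranslate]
  | add F G hF hG => simp_all [polyTranslate]
  | mul_X F i hF => simp_all [polyTranslate]

theorem polyTranslate_sub_C_eval_mem_idealOfVars (F : MvPolynomial σ R) (p : σ → R) :
    polyTranslate F p - C (eval p F) ∈ idealOfVars σ R := by
  rw [mem_idealOfVars_iff_constantCoeff_eq_zero, map_sub, constantCoeff_polyTranslate,
    constantCoeff_C, sub_self]

theorem polyTranslate_aeval (Q : MvPolynomial τ R) (g : τ → MvPolynomial σ R) (p : σ → R) :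
    polyTranslate (aeval g Q) p =
      aeval (fun i => polyTranslate (g i) p - C (eval p (g i)))
        (polyTranslate Q fun i => eval p (g i)) := by
  induction Q using MvPolynomial.induction_on with
  | C a => simp [polyTranslate]
  | add F G hF hG => simp_all [polyTranslate]
  | mul_X F i hF => simp_all [polyTranslate, algebraMap_eq]

end Translate

theorem eval_snoc_X {R : Type*} [CommSemiring R] {m : ℕ} (p : Fin m → R)
    (f : MvPolynomial (Fin m) R) :
    (fun i => eval p ((Fin.snoc X f : Fin (m + 1) → MvPolynomial (Fin m) R) i)) =
      Fin.snoc p (eval p f) := by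
  ext i
  cases i using Fin.lastCases <;> simp

theorem multiplicity_of_substitution_general {R σ τ : Type*} [CommRing R] {r : ℕ}
    {Q : MvPolynomial τ R} {g : τ → MvPolynomial σ R} {p : σ → R}
    (hQ : HasZeroOfMultAtLeast Q (fun i => eval p (g i)) r) :
    HasZeroOfMultAtLeast (aeval g Q) p r := by
  rw [hasZeroOfMultAtLeast_iff_polyTranslate_mem_pow] at hQ ⊢
  rw [polyTranslate_aeval]
  exact aeval_mem_pow_of_mem_pow_idealOfVars
    (fun i => polyTranslate_sub_C_eval_mem_idealOfVars (g i) p) hQ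

/-- Let `K` be a field, `m, r ≥ 1`, `Q ∈ K[X_1,…,X_m,Y]`, `f ∈ K[X_1,…,X_m]`, `p ∈ K^m`.
If `Q` has a zero of multiplicity at least `r` at `(p, f(p))` then
`F(X) = Q(X, f(X))` has a zero of multiplicity at least `r` at `p`. -/
theorem multiplicity_of_substitution
    (K : Type*) [Field K]
    (m : ℕ) (hm : 1 ≤ m) (r : ℕ) (hr : 1 ≤ r)
    (Q : MvPolynomial (Fin (m + 1)) K) (f : MvPolynomial (Fin m) K) (p : Fin m → K)
    (hQ : HasZeroOfMultAtLeast Q (Fin.snoc p (MvPolynomial.eval p f)) r) :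
    HasZeroOfMultAtLeast (MvPolynomial.aeval (Fin.snoc MvPolynomial.X f) Q) p r :=
  multiplicity_of_substitution_general (by rwa [eval_snoc_X])
end
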